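/- Let K be a number field and let φ: P¹_K → P¹_K be a morphism of degree m ≥ 2 that ramifies at exactly two points of P¹(K̄). Then there exist a field extension L of K of degree at most 2 and Möbius transformations σ, γ ∈ PGL₂(L) such that the composition σ ∘ φ ∘ γ is the map x ↦ a·x^m for some a ∈ L^×. -/

import Mathlib

/-!
Statement 12.  Let `K` be a number field and `φ : ℙ¹_K → ℙ¹_K` of degree `m ≥ 2`
ramifying at exactly two points of `ℙ¹(K̄)`.  Then there are a field extension
`L/K` of degree at most `2` and Möbius transformations `σ, γ` over `L` such that
`σ ∘ φ ∘ γ` is `x ↦ a·x^m` (in homogeneous coordinates `[x : y] ↦ [a·x^m : y^m]`).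

`φ` is encoded by a pair of homogeneous binary forms of degree `m` over `K` with no
common projective zero; `L` is realized as an intermediate field of `K̄/K`; elements
of `PGL₂(L)` are induced by matrices in `GL₂(L)` and equality of morphisms is
equality of the form pairs up to the scalar `lam`.
-/

noncomputable section

open Polynomial

namespace CGR

variable {F : Type*} [Field F]

/-- The homogeneous Wronskian of a pair of binary forms. -/
def wronskian (P Q : MvPolynomial (Fin 2) F) : MvPolynomial (Fin 2) F :=
  MvPolynomial.pderiv 0 P * MvPolynomial.pderiv 1 Q -
    MvPolynomial.pderiv 1 P * MvPolynomial.pderiv 0 Q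

/-- The binary forms `P, Q` have no common projective root. -/
def NoCommonRoot (P Q : MvPolynomial (Fin 2) F) : Prop :=
  ∀ u : Fin 2 → F, MvPolynomial.eval u P = 0 → MvPolynomial.eval u Q = 0 → u = 0

/-- The set of ramification points in `ℙ¹(F)` of the morphism `[P : Q]`. -/
def ramPoints (P Q : MvPolynomial (Fin 2) F) : Set (Projectivization F (Fin 2 → F)) :=
  {x | MvPolynomial.eval x.rep (wronskian P Q) = 0}

/-- Substitution of a matrix in a binary form. -/
def matComp {R : Type*} [CommRing R] (M : Matrix (Fin 2) (Fin 2) R)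
    (P : MvPolynomial (Fin 2) R) : MvPolynomial (Fin 2) R :=
  MvPolynomial.bind₁ (fun i => ∑ j, MvPolynomial.C (M i j) * MvPolynomial.X j) P

end CGR

open CGR

/-!
Move the two ramification points to `0` and `∞`. The dehomogenised Wronskian `W` of `φ = [p : q]`
then has no zero except `0`, so `deg W = ord₀ W`. The members `r` and `s` of the pencil spanned by
`p` and `q` which vanish at `0` and at `∞` satisfy `ord₀ W = ord₀ r - 1` and
`deg W = deg s + m - 1`, and `ord₀ r ≤ m`. Hence `s` is constant and `r` is a multiple of `x ^ m`,
that is, `r / s` is `x ↦ a * x ^ m`.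

As for the field of definition, the Galois group permutes the standard coordinate vectors of the
two ramification points, so the stabiliser of either of them has index at most two.
-/

namespace CGR

theorem natCast_ne_zero_of_factorial_ne_zero {R : Type*} [Semiring R] {m k : ℕ}
    (hm : (m.factorial : R) ≠ 0) (hk : 0 < k) (hkm : k ≤ m) : (k : R) ≠ 0 := by
  obtain ⟨l, hl⟩ := Nat.dvd_factorial hk hkm
  rw [hl, Nat.cast_mul] at hm
  exact left_ne_zero_of_mul hm

theorem derivation_aeval {σ R A : Type*} [Fintype σ] [CommSemiring R] [CommSemiring A]
    [Algebra R A] (D : Derivation R A A) (f : σ → A) (P : MvPolynomial σ R) :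
    D (MvPolynomial.aeval f P) =
      ∑ i, MvPolynomial.aeval f (MvPolynomial.pderiv i P) * D (f i) := by
  classical
  induction P using MvPolynomial.induction_on with
  | C a => simp
  | add P Q hP hQ => simp only [map_add, hP, hQ, add_mul, Finset.sum_add_distrib]
  | mul_X P j hP =>
    simp only [map_mul, Derivation.leibniz, MvPolynomial.aeval_X, hP, MvPolynomial.pderiv_X,
      smul_eq_mul, map_add, add_mul, Finset.sum_add_distrib, Finset.mul_sum]
    congr 1
    · simp [Pi.single_apply, apply_ite]
    · exact Finset.sum_congr rfl fun i _ ↦ by ring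

theorem aeval_smul_of_isHomogeneous {σ R A : Type*} [CommSemiring R] [CommSemiring A]
    [Algebra R A] {n : ℕ} {P : MvPolynomial σ R} (hP : P.IsHomogeneous n) (c : A) (u : σ → A) :
    MvPolynomial.aeval (c • u) P = c ^ n * MvPolynomial.aeval u P := by
  rw [MvPolynomial.aeval_def, MvPolynomial.eval₂_eq, MvPolynomial.aeval_def,
    MvPolynomial.eval₂_eq, Finset.mul_sum]
  refine Finset.sum_congr rfl fun d hd ↦ ?_
  simp only [Pi.smul_apply, smul_eq_mul, mul_pow, Finset.prod_mul_distrib,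
    Finset.prod_pow_eq_pow_sum, ← hP.degree_eq_sum_deg_support hd]
  ring

section Univariate

theorem coeff_mul_derivative_of_natDegree_add_eq {R : Type*} [CommSemiring R] {s h : R[X]} {n : ℕ}
    (hn : s.natDegree + h.natDegree = n + 1) :
    (s * derivative h).coeff n = h.natDegree * (s.leadingCoeff * h.leadingCoeff) := by
  rcases hh : h.natDegree with _ | b
  · simp [derivative_of_natDegree_zero hh]
  · obtain rfl : n = s.natDegree + b := by omega
    rw [coeff_mul_add_eq_of_natDegree_le le_rfl ((natDegree_derivative_le h).trans (by omega)),
      coeff_derivative, leadingCoeff, leadingCoeff, hh]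
    push_cast
    ring

theorem eq_C_mul_X_pow_of_X_pow_dvd {R : Type*} [Semiring R] {r : R[X]} {m : ℕ}
    (hdeg : r.natDegree ≤ m) (hdvd : X ^ m ∣ r) : r = C (r.coeff m) * X ^ m := by
  ext d
  rw [coeff_C_mul, coeff_X_pow]
  rcases lt_trichotomy d m with hd | rfl | hd
  · simp [X_pow_dvd_iff.1 hdvd d hd, hd.ne]
  · simp
  · simp [coeff_eq_zero_of_natDegree_lt (hdeg.trans_lt hd), hd.ne']

theorem natDegree_eq_rootMultiplicity_zero {F E : Type*} [Field F] [Field E] [IsAlgClosed E]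
    [Algebra F E] {f : F[X]} (hf : ∀ t : E, t ≠ 0 → aeval t f ≠ 0) :
    f.natDegree = f.rootMultiplicity 0 := by
  rw [eq_rootMultiplicity_map (algebraMap F E).injective, map_zero,
    ← natDegree_map (algebraMap F E), (IsAlgClosed.splits _).natDegree_eq_card_roots, eq_comm]
  classical
  rw [← count_roots, Multiset.count_eq_card]
  intro t ht
  by_contra ht0
  exact hf t (Ne.symm ht0) (by rw [aeval_def, ← eval_map]; exact isRoot_of_mem_roots ht)

theorem wronskian_pencil {R : Type*} [CommRing R] (p q : R[X]) {a b α β : R}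
    (h : α * a + β * b = 1) :
    Polynomial.wronskian (C b * p - C a * q) (C α * p + C β * q) = Polynomial.wronskian p q := by
  have hC : (C α * C a + C β * C b : R[X]) = 1 := by rw [← C_mul, ← C_mul, ← C_add, h, C_1]
  simp only [Polynomial.wronskian, derivative_sub, derivative_add, derivative_C_mul]
  linear_combination (p * derivative q - derivative p * q) * hC

variable {R : Type*} [CommRing R] [IsDomain R]

theorem rootMultiplicity_le_natDegree (r : R[X]) (a : R) :
    r.rootMultiplicity a ≤ r.natDegree := by
  classical
  rw [← count_roots]
  exact (Multiset.count_le_card _ _).trans (card_roots' r)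

theorem rootMultiplicity_wronskian_add_one {r g : R[X]} {a : R}
    (hr : (r.rootMultiplicity a : R) ≠ 0) (hg : g.eval a ≠ 0) :
    (Polynomial.wronskian r g).rootMultiplicity a + 1 = r.rootMultiplicity a := by
  have hr0 : r ≠ 0 := by rintro rfl; simp at hr
  obtain ⟨e, he⟩ : ∃ e, r.rootMultiplicity a = e + 1 :=
    Nat.exists_eq_succ_of_ne_zero fun h ↦ hr (by rw [h, Nat.cast_zero])
  obtain ⟨s, hs, hdvd⟩ := r.exists_eq_pow_rootMultiplicity_mul_and_not_dvd hr0 a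
  have hsa : s.eval a ≠ 0 := fun h ↦ hdvd (dvd_iff_isRoot.2 h)
  rw [he] at hs hr ⊢
  set w := (X - C a) * Polynomial.wronskian s g - C ((e + 1 : ℕ) : R) * s * g with hw
  have hfactor : Polynomial.wronskian r g = w * (X - C a) ^ e := by
    rw [hw, hs]
    simp only [Polynomial.wronskian, derivative_mul, derivative_X_sub_C_pow, Nat.add_sub_cancel]
    ring
  have hwa : ¬ w.IsRoot a := by simp [hw, hr, hsa, hg, -Nat.cast_add]
  have hw0 : w ≠ 0 := by rintro h; simp [h] at hwa
  rw [hfactor, rootMultiplicity_mul_X_sub_C_pow hw0, rootMultiplicity_eq_zero hwa, zero_add]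

theorem natDegree_wronskian_add_one {s h : R[X]} (hs : s ≠ 0) (hh : h ≠ 0)
    (hsh : (s.natDegree : R) ≠ h.natDegree) :
    (Polynomial.wronskian s h).natDegree + 1 = s.natDegree + h.natDegree := by
  obtain ⟨n, hn⟩ : ∃ n, s.natDegree + h.natDegree = n + 1 :=
    Nat.exists_eq_succ_of_ne_zero fun h0 ↦ hsh (by
      rw [(Nat.add_eq_zero_iff.1 h0).1, (Nat.add_eq_zero_iff.1 h0).2])
  have hcoeff : (Polynomial.wronskian s h).coeff n ≠ 0 := by
    rw [Polynomial.wronskian, coeff_sub, coeff_mul_derivative_of_natDegree_add_eq hn,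
      mul_comm (derivative s), coeff_mul_derivative_of_natDegree_add_eq ((add_comm _ _).trans hn),
      mul_comm h.leadingCoeff, ← sub_mul]
    exact mul_ne_zero (sub_ne_zero.2 hsh.symm)
      (mul_ne_zero (leadingCoeff_ne_zero.2 hs) (leadingCoeff_ne_zero.2 hh))
  have hlt := natDegree_wronskian_lt_add (fun h0 ↦ hcoeff (by rw [h0, coeff_zero]))
  have hle := le_natDegree_of_ne_zero hcoeff
  omega

end Univariate

section Pencil

variable {R : Type*} [CommRing R] {m : ℕ} {p q : R[X]}

theorem natDegree_C_mul_sub_C_mul_le (hp : p.natDegree ≤ m) (hq : q.natDegree ≤ m) (a b : R) :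
    (C b * p - C a * q).natDegree ≤ m :=
  (natDegree_sub_le _ _).trans <|
    max_le ((natDegree_C_mul_le _ _).trans hp) ((natDegree_C_mul_le _ _).trans hq)

variable [IsDomain R]

theorem rootMultiplicity_pencil (hp : p.natDegree ≤ m) (hq : q.natDegree ≤ m)
    (hm : (m.factorial : R) ≠ 0) (h0 : IsCoprime (p.coeff 0) (q.coeff 0))
    (hW : Polynomial.wronskian p q ≠ 0) :
    (C (q.coeff 0) * p - C (p.coeff 0) * q).rootMultiplicity 0 =
      (Polynomial.wronskian p q).rootMultiplicity 0 + 1 := by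
  obtain ⟨α, β, hαβ⟩ := h0
  set r := C (q.coeff 0) * p - C (p.coeff 0) * q with hr
  rw [← wronskian_pencil p q hαβ, ← hr] at hW ⊢
  have hr0 : r ≠ 0 := fun h ↦ hW (by rw [h, wronskian_zero_left])
  have hroot : r.IsRoot 0 := by simp [hr, ← coeff_zero_eq_eval_zero, mul_comm]
  have hle : r.rootMultiplicity 0 ≤ m :=
    (rootMultiplicity_le_natDegree r 0).trans (natDegree_C_mul_sub_C_mul_le hp hq _ _)
  refine (rootMultiplicity_wronskian_add_one
    (natCast_ne_zero_of_factorial_ne_zero hm ((rootMultiplicity_pos hr0).2 hroot) hle) ?_).symm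
  rw [← coeff_zero_eq_eval_zero, coeff_add, coeff_C_mul, coeff_C_mul, hαβ]
  exact one_ne_zero

theorem natDegree_pencil_add (hp : p.natDegree ≤ m) (hq : q.natDegree ≤ m)
    (hm : (m.factorial : R) ≠ 0) (h0 : IsCoprime (p.coeff m) (q.coeff m))
    (hW : Polynomial.wronskian p q ≠ 0) :
    (C (q.coeff m) * p - C (p.coeff m) * q).natDegree + m =
      (Polynomial.wronskian p q).natDegree + 1 := by
  obtain ⟨α, β, hαβ⟩ := h0
  set s := C (q.coeff m) * p - C (p.coeff m) * q with hs
  set h := C α * p + C β * q with hh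
  rw [← wronskian_pencil p q hαβ, ← hs, ← hh] at hW ⊢
  have hs0 : s ≠ 0 := fun h ↦ hW (by rw [h, wronskian_zero_left])
  have hh0 : h ≠ 0 := fun h ↦ hW (by rw [h, wronskian_zero_right])
  have hlt : s.natDegree < m := by
    refine lt_of_le_of_ne (natDegree_C_mul_sub_C_mul_le hp hq _ _) fun heq ↦
      leadingCoeff_ne_zero.2 hs0 ?_
    rw [leadingCoeff, heq, hs, coeff_sub, coeff_C_mul, coeff_C_mul, mul_comm, sub_self]
  have hhm : h.natDegree = m := by
    refine le_antisymm (natDegree_add_le_of_degree_le ((natDegree_C_mul_le _ _).trans hp)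
      ((natDegree_C_mul_le _ _).trans hq)) (le_natDegree_of_ne_zero ?_)
    rw [coeff_add, coeff_C_mul, coeff_C_mul, hαβ]
    exact one_ne_zero
  have hcast : (s.natDegree : R) ≠ h.natDegree := by
    rw [hhm, ← Nat.add_sub_cancel' hlt.le, Nat.cast_add, Ne, left_eq_add]
    exact natCast_ne_zero_of_factorial_ne_zero hm (Nat.sub_pos_of_lt hlt) (Nat.sub_le _ _)
  rw [natDegree_wronskian_add_one hs0 hh0 hcast, hhm]

theorem pencil_eq_of_natDegree_wronskian (hp : p.natDegree ≤ m) (hq : q.natDegree ≤ m)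
    (hm : (m.factorial : R) ≠ 0) (h0 : IsCoprime (p.coeff 0) (q.coeff 0))
    (h1 : IsCoprime (p.coeff m) (q.coeff m)) (hW : Polynomial.wronskian p q ≠ 0)
    (hWdeg : (Polynomial.wronskian p q).natDegree = (Polynomial.wronskian p q).rootMultiplicity 0) :
    ∃ c : R, c ≠ 0 ∧ C (q.coeff 0) * p - C (p.coeff 0) * q = C c * X ^ m ∧
      C (q.coeff m) * p - C (p.coeff m) * q = C (-c) := by
  have hr := rootMultiplicity_pencil hp hq hm h0 hW
  have hs := natDegree_pencil_add hp hq hm h1 hW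
  have hdeg := natDegree_C_mul_sub_C_mul_le hp hq (p.coeff 0) (q.coeff 0)
  set r := C (q.coeff 0) * p - C (p.coeff 0) * q with hr_def
  set s := C (q.coeff m) * p - C (p.coeff m) * q with hs_def
  have hrle := rootMultiplicity_le_natDegree r 0
  have hs0 : s.natDegree = 0 := by omega
  have hrm : r.rootMultiplicity 0 = m := by omega
  have hX : X ^ m ∣ r := by simpa [hrm] using r.pow_rootMultiplicity_dvd 0
  have hr_eq := eq_C_mul_X_pow_of_X_pow_dvd hdeg hX
  refine ⟨r.coeff m, fun h ↦ ?_, hr_eq, ?_⟩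
  · rw [hr_eq, h, C_0, zero_mul, rootMultiplicity_zero] at hr
    omega
  · rw [eq_C_of_natDegree_eq_zero hs0, hr_def, hs_def]
    congr 1
    simp only [coeff_sub, coeff_C_mul]
    ring

end Pencil

section Dehomogenize

variable {R : Type*} [CommSemiring R] {m : ℕ} {P Q : MvPolynomial (Fin 2) R}

/-- The univariate polynomial `P(X, 1)` attached to a binary form `P`. -/
def dehomogenize : MvPolynomial (Fin 2) R →ₐ[R] R[X] :=
  MvPolynomial.aeval ![X, 1]

theorem aeval_dehomogenize {A : Type*} [CommSemiring A] [Algebra R A] (t : A)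
    (P : MvPolynomial (Fin 2) R) :
    aeval t (dehomogenize P) = MvPolynomial.aeval ![t, 1] P := by
  rw [dehomogenize, ← AlgHom.comp_apply, MvPolynomial.comp_aeval]
  congr 2
  ext i
  fin_cases i <;> simp

theorem eq_of_dehomogenize_eq (hP : P.IsHomogeneous m)
    (hQ : Q.IsHomogeneous m) (h : dehomogenize P = dehomogenize Q) : P = Q := by
  rw [← homogenize_eq_of_isHomogeneous hP rfl, ← homogenize_eq_of_isHomogeneous hQ rfl]
  exact congrArg (homogenize · m) h

theorem natDegree_dehomogenize_le (hP : P.IsHomogeneous m) :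
    (dehomogenize P).natDegree ≤ m := by
  rw [← mul_one m]
  refine MvPolynomial.aeval_natDegree_le P hP.totalDegree_le _ fun i ↦ ?_
  fin_cases i <;> simp [natDegree_X_le]

theorem coeff_zero_dehomogenize (P : MvPolynomial (Fin 2) R) :
    (dehomogenize P).coeff 0 = MvPolynomial.eval ![0, 1] P := by
  rw [coeff_zero_eq_aeval_zero, aeval_dehomogenize]; rfl

theorem coeff_dehomogenize (hP : P.IsHomogeneous m) :
    (dehomogenize P).coeff m = MvPolynomial.eval ![1, 0] P := by
  conv_rhs => rw [← homogenize_eq_of_isHomogeneous (p := dehomogenize P) hP rfl, homogenize]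
  rw [map_sum, Finset.sum_eq_single (m, 0)]
  · simp [MvPolynomial.eval_monomial]
  · rintro ⟨k, l⟩ hkl hne
    have hl : l ≠ 0 := by rintro rfl; simp_all
    simp [MvPolynomial.eval_monomial, hl]
  · simp

theorem derivative_dehomogenize (P : MvPolynomial (Fin 2) R) :
    derivative (dehomogenize P) = dehomogenize (MvPolynomial.pderiv 0 P) := by
  simpa [dehomogenize, Fin.sum_univ_two] using derivation_aeval derivative' ![X, 1] P

theorem natCast_mul_dehomogenize (hP : P.IsHomogeneous m) :
    (m : R[X]) * dehomogenize P =
      X * dehomogenize (MvPolynomial.pderiv 0 P) + dehomogenize (MvPolynomial.pderiv 1 P) := by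
  have h := congrArg dehomogenize hP.sum_X_mul_pderiv
  simp only [Fin.sum_univ_two, map_add, map_mul, nsmul_eq_mul, map_natCast] at h
  rw [← h]
  simp [dehomogenize]

end Dehomogenize

section MatComp

variable {R : Type*} [CommRing R] (M : Matrix (Fin 2) (Fin 2) R)

theorem isHomogeneous_matComp {n : ℕ} {P : MvPolynomial (Fin 2) R}
    (hP : P.IsHomogeneous n) : (matComp M P).IsHomogeneous n := by
  have h := hP.aeval (fun i ↦ ∑ j, MvPolynomial.C (M i j) * MvPolynomial.X j) (n := 1)
    fun i ↦ .sum _ _ _ fun j _ ↦ .C_mul (MvPolynomial.isHomogeneous_X R j) _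
  rwa [one_mul] at h

theorem aeval_matComp {A : Type*} [CommRing A] [Algebra R A] (u : Fin 2 → A)
    (P : MvPolynomial (Fin 2) R) :
    MvPolynomial.aeval u (matComp M P) =
      MvPolynomial.aeval ((M.map (algebraMap R A)).mulVec u) P := by
  rw [matComp, MvPolynomial.aeval_bind₁]
  congr 2
  ext i
  simp [Matrix.mulVec, dotProduct]

theorem pderiv_matComp (j : Fin 2) (P : MvPolynomial (Fin 2) R) :
    MvPolynomial.pderiv j (matComp M P) =
      ∑ i, matComp M (MvPolynomial.pderiv i P) * MvPolynomial.C (M i j) := by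
  rw [matComp, MvPolynomial.bind₁, derivation_aeval]
  refine Finset.sum_congr rfl fun i _ ↦ congrArg _ ?_
  fin_cases j <;> simp [MvPolynomial.pderiv_X]

end MatComp

section Wronskian

variable {F : Type*} [Field F] {m : ℕ} {P Q : MvPolynomial (Fin 2) F}

theorem map_wronskian {E : Type*} [Field E] (f : F →+* E)
    (P Q : MvPolynomial (Fin 2) F) :
    MvPolynomial.map f (wronskian P Q) =
      wronskian (MvPolynomial.map f P) (MvPolynomial.map f Q) := by
  simp only [wronskian, map_sub, map_mul, MvPolynomial.pderiv_map]

theorem wronskian_matComp (M : Matrix (Fin 2) (Fin 2) F)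
    (P Q : MvPolynomial (Fin 2) F) :
    wronskian (matComp M P) (matComp M Q) =
      MvPolynomial.C M.det * matComp M (wronskian P Q) := by
  simp only [wronskian, pderiv_matComp, Fin.sum_univ_two, Matrix.det_fin_two]
  simp only [matComp, map_sub, map_mul]
  ring

theorem isHomogeneous_wronskian (hP : P.IsHomogeneous m) (hQ : Q.IsHomogeneous m) :
    (wronskian P Q).IsHomogeneous (m - 1 + (m - 1)) :=
  (hP.pderiv.mul hQ.pderiv).sub (hP.pderiv.mul hQ.pderiv)

theorem natCast_mul_wronskian_dehomogenize (hP : P.IsHomogeneous m) (hQ : Q.IsHomogeneous m) :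
    (m : F[X]) * Polynomial.wronskian (dehomogenize P) (dehomogenize Q) =
      -dehomogenize (wronskian P Q) := by
  rw [Polynomial.wronskian, derivative_dehomogenize, derivative_dehomogenize, wronskian, map_sub,
    map_mul, map_mul]
  linear_combination dehomogenize (MvPolynomial.pderiv 0 Q) * natCast_mul_dehomogenize hP -
    dehomogenize (MvPolynomial.pderiv 0 P) * natCast_mul_dehomogenize hQ

theorem aeval_wronskian_dehomogenize_ne_zero {A : Type*} [CommRing A] [Algebra F A]
    (hP : P.IsHomogeneous m) (hQ : Q.IsHomogeneous m) {t : A}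
    (ht : MvPolynomial.aeval ![t, 1] (wronskian P Q) ≠ 0) :
    aeval t (Polynomial.wronskian (dehomogenize P) (dehomogenize Q)) ≠ 0 := fun h0 ↦ ht <| by
  have h := congrArg (aeval t) (natCast_mul_wronskian_dehomogenize hP hQ)
  rwa [map_mul, h0, mul_zero, map_neg, aeval_dehomogenize, eq_comm, neg_eq_zero] at h

end Wronskian

section NoCommonRoot

variable {F : Type*} [Field F] {P Q : MvPolynomial (Fin 2) F}

theorem NoCommonRoot.isCoprime_eval (h : NoCommonRoot P Q) {u : Fin 2 → F} (hu : u ≠ 0) :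
    IsCoprime (MvPolynomial.eval u P) (MvPolynomial.eval u Q) := by
  rw [Semifield.isCoprime_iff]
  by_contra! h0
  exact hu (h u h0.1 h0.2)

theorem NoCommonRoot.matComp (h : NoCommonRoot P Q) (γ : Matrix.GeneralLinearGroup (Fin 2) F) :
    NoCommonRoot (matComp γ P) (matComp γ Q) := by
  intro u hP hQ
  simp only [← MvPolynomial.coe_aeval_eq_eval, RingHom.coe_coe, aeval_matComp] at hP hQ
  refine Matrix.eq_zero_of_mulVec_eq_zero γ.det_ne_zero (h _ ?_ ?_)
  · simpa using hP
  · simpa using hQ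

theorem NoCommonRoot.of_map {E : Type*} [Field E] {f : F →+* E}
    (h : NoCommonRoot (MvPolynomial.map f P) (MvPolynomial.map f Q)) : NoCommonRoot P Q := by
  intro u hP hQ
  have hfu : f ∘ u = 0 := h _ (by rw [← MvPolynomial.map_eval, hP, map_zero])
    (by rw [← MvPolynomial.map_eval, hQ, map_zero])
  exact funext fun i ↦ (map_eq_zero f).1 (congrFun hfu i)

end NoCommonRoot

section NormalForm

variable {F E : Type*} [Field F] [Field E] [IsAlgClosed E] [Algebra F E] {m : ℕ}
  {P Q : MvPolynomial (Fin 2) F}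

/-- The binary forms `P, Q` of degree `m` define a morphism `φ` such that `σ ∘ φ ∘ γ` is
`x ↦ a * x ^ m` for some `σ, γ ∈ PGL₂(F)` and `a ≠ 0`. Elements of `PGL₂(F)` are represented by
invertible matrices, and two pairs of forms define the same morphism when they agree up to the
scalar `lam`. -/
def IsConjugateToPowerMap (m : ℕ) (P Q : MvPolynomial (Fin 2) F) : Prop :=
  ∃ (σ γ : Matrix.GeneralLinearGroup (Fin 2) F) (a lam : Fˣ),
    MvPolynomial.C (σ 0 0) * matComp γ P + MvPolynomial.C (σ 0 1) * matComp γ Q =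
      MvPolynomial.C (lam : F) * (MvPolynomial.C (a : F) * MvPolynomial.X 0 ^ m) ∧
    MvPolynomial.C (σ 1 0) * matComp γ P + MvPolynomial.C (σ 1 1) * matComp γ Q =
      MvPolynomial.C (lam : F) * MvPolynomial.X 1 ^ m

theorem exists_pencil_eq_of_wronskian_ne_zero (hm : (m.factorial : F) ≠ 0)
    (hP : P.IsHomogeneous m) (hQ : Q.IsHomogeneous m)
    (h0 : IsCoprime (MvPolynomial.eval ![0, 1] P) (MvPolynomial.eval ![0, 1] Q))
    (h1 : IsCoprime (MvPolynomial.eval ![1, 0] P) (MvPolynomial.eval ![1, 0] Q))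
    (hW : ∀ u : Fin 2 → E, (∀ i, u i ≠ 0) → MvPolynomial.aeval u (wronskian P Q) ≠ 0) :
    ∃ c : F, c ≠ 0 ∧
      MvPolynomial.C (MvPolynomial.eval ![0, 1] Q) * P -
        MvPolynomial.C (MvPolynomial.eval ![0, 1] P) * Q =
          MvPolynomial.C c * MvPolynomial.X 0 ^ m ∧
      MvPolynomial.C (MvPolynomial.eval ![1, 0] Q) * P -
        MvPolynomial.C (MvPolynomial.eval ![1, 0] P) * Q =
          MvPolynomial.C (-c) * MvPolynomial.X 1 ^ m := by
  have hw (t : E) (ht : t ≠ 0) :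
      aeval t (Polynomial.wronskian (dehomogenize P) (dehomogenize Q)) ≠ 0 :=
    aeval_wronskian_dehomogenize_ne_zero hP hQ (hW _ (Fin.forall_fin_two.2 ⟨ht, one_ne_zero⟩))
  have hw0 : Polynomial.wronskian (dehomogenize P) (dehomogenize Q) ≠ 0 := fun h ↦
    hw 1 one_ne_zero (by rw [h, map_zero])
  rw [← coeff_zero_dehomogenize, ← coeff_zero_dehomogenize] at h0 ⊢
  rw [← coeff_dehomogenize hP, ← coeff_dehomogenize hQ] at h1 ⊢
  obtain ⟨c, hc, hr, hs⟩ := pencil_eq_of_natDegree_wronskian (natDegree_dehomogenize_le hP)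
    (natDegree_dehomogenize_le hQ) hm h0 h1 hw0 (natDegree_eq_rootMultiplicity_zero hw)
  refine ⟨c, hc, eq_of_dehomogenize_eq ((hP.C_mul _).sub (hQ.C_mul _))
    ((MvPolynomial.isHomogeneous_X_pow 0 m).C_mul c) ?_,
    eq_of_dehomogenize_eq ((hP.C_mul _).sub (hQ.C_mul _))
    ((MvPolynomial.isHomogeneous_X_pow 1 m).C_mul (-c)) ?_⟩
  · simpa [dehomogenize, algebraMap_eq] using hr
  · simpa [dehomogenize, algebraMap_eq] using hs

theorem isConjugateToPowerMap_of_wronskian_ne_zero (hm : (m.factorial : F) ≠ 0)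
    (hP : P.IsHomogeneous m) (hQ : Q.IsHomogeneous m) (hncr : NoCommonRoot P Q)
    (γ : Matrix.GeneralLinearGroup (Fin 2) F)
    (hW : ∀ u : Fin 2 → E, (∀ i, u i ≠ 0) →
      MvPolynomial.aeval ((γ.val.map (algebraMap F E)).mulVec u) (wronskian P Q) ≠ 0) :
    IsConjugateToPowerMap m P Q := by
  have hncr' := hncr.matComp γ
  have hwr (u : Fin 2 → E) (hu : ∀ i, u i ≠ 0) :
      MvPolynomial.aeval u (wronskian (matComp γ.val P) (matComp γ.val Q)) ≠ 0 := by
    rw [wronskian_matComp, map_mul, MvPolynomial.aeval_C, aeval_matComp]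
    exact mul_ne_zero (by simpa using γ.det_ne_zero) (hW u hu)
  obtain ⟨c, hc, hr, hs⟩ := exists_pencil_eq_of_wronskian_ne_zero hm
    (isHomogeneous_matComp _ hP) (isHomogeneous_matComp _ hQ)
    (hncr'.isCoprime_eval (by simp)) (hncr'.isCoprime_eval (by simp)) hwr
  set P' := matComp γ.val P
  set Q' := matComp γ.val Q
  have hc_eq : MvPolynomial.eval ![0, 1] Q' * MvPolynomial.eval ![1, 0] P' -
      MvPolynomial.eval ![0, 1] P' * MvPolynomial.eval ![1, 0] Q' = c := by
    simpa using congrArg (MvPolynomial.eval ![1, 0]) hr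
  have hdet : Matrix.det !![MvPolynomial.eval ![0, 1] Q', -MvPolynomial.eval ![0, 1] P';
      MvPolynomial.eval ![1, 0] Q', -MvPolynomial.eval ![1, 0] P'] ≠ 0 := by
    rw [Matrix.det_fin_two_of, ← neg_ne_zero]
    convert hc using 1
    linear_combination hc_eq
  refine ⟨.mkOfDetNeZero _ hdet, γ, -1, Units.mk0 (-c) (neg_ne_zero.2 hc), ?_, ?_⟩
  · simpa [Matrix.GeneralLinearGroup.mkOfDetNeZero, sub_eq_add_neg] using hr
  · simpa [Matrix.GeneralLinearGroup.mkOfDetNeZero, sub_eq_add_neg] using hs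

end NormalForm

section GaloisDescent

variable {K E ι : Type*} [Field K] [Field E] [Algebra K E] [IsGalois K E]

theorem finrank_fixedField_pos_and_le_index (H : Subgroup (E ≃ₐ[K] E)) [H.FiniteIndex] :
    0 < Module.finrank K (IntermediateField.fixedField H) ∧
      Module.finrank K (IntermediateField.fixedField H) ≤ H.index := by
  have hle : H ≤ (IntermediateField.fixedField H).fixingSubgroup :=
    (IntermediateField.le_iff_le H _).1 le_rfl
  have := Subgroup.finiteIndex_of_le hle
  rw [IntermediateField.finrank_eq_fixingSubgroup_index]
  exact ⟨Nat.pos_of_ne_zero Subgroup.FiniteIndex.index_ne_zero, Subgroup.index_antitone hle⟩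

theorem exists_intermediateField_finrank_le_two {v w : ι → E} (hvw : v ≠ w)
    (h : ∀ g : E ≃ₐ[K] E, Set.MapsTo (g • ·) {v, w} {v, w}) :
    ∃ L : IntermediateField K E, 0 < Module.finrank K L ∧ Module.finrank K L ≤ 2 ∧
      (∀ i, v i ∈ L) ∧ ∀ i, w i ∈ L := by
  set H := MulAction.stabilizer (E ≃ₐ[K] E) v with hH
  have horbit : MulAction.orbit (E ≃ₐ[K] E) v ⊆ {v, w} := by
    rintro _ ⟨g, rfl⟩
    exact h g (Set.mem_insert v {w})
  have hindex : H.index ≤ 2 := by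
    rw [hH, MulAction.index_stabilizer, ← Set.ncard_pair hvw]
    exact Set.ncard_le_ncard horbit
  have : H.FiniteIndex := ⟨by
    rw [hH, MulAction.index_stabilizer]
    exact Set.ncard_ne_zero_of_mem (MulAction.mem_orbit_self v)
      ((Set.toFinite {v, w}).subset horbit)⟩
  have hHw (g : H) : g • w = w := by
    refine (h g (Set.mem_insert_of_mem v rfl)).resolve_left fun hgw ↦ hvw ?_
    exact (MulAction.injective g.1 (hgw.trans (MulAction.mem_stabilizer_iff.1 g.2).symm)).symm
  obtain ⟨hpos, hle⟩ := finrank_fixedField_pos_and_le_index H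
  exact ⟨IntermediateField.fixedField H, hpos, hle.trans hindex, fun i g ↦ congrFun g.2 i,
    fun i g ↦ congrFun (hHw g) i⟩

end GaloisDescent

section ProjectiveLine

variable {F : Type*} [Field F]

/-- `v` is the standard representative `(t, 1)` or `(1, 0)` of a point of `ℙ¹(F)`. -/
def IsNormalized (v : Fin 2 → F) : Prop :=
  v 1 = 1 ∨ v = ![1, 0]

theorem IsNormalized.ne_zero {v : Fin 2 → F} (hv : IsNormalized v) : v ≠ 0 := by
  rintro rfl
  rcases hv with h | h
  · exact zero_ne_one h
  · exact zero_ne_one (congrFun h 0)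

theorem exists_smul_isNormalized {v : Fin 2 → F} (hv : v ≠ 0) :
    ∃ a : F, IsNormalized (a • v) := by
  by_cases h : v 1 = 0
  · have h0 : v 0 ≠ 0 := fun h0 ↦ hv (by ext i; fin_cases i <;> assumption)
    exact ⟨(v 0)⁻¹, .inr (by ext i; fin_cases i <;> simp [h, h0])⟩
  · exact ⟨(v 1)⁻¹, .inl (inv_mul_cancel₀ h)⟩

theorem IsNormalized.eq_of_smul_eq {v w : Fin 2 → F} (hv : IsNormalized v) (hw : IsNormalized w)
    {a : F} (h : a • v = w) : v = w := by
  rcases hv with hv | rfl <;> rcases hw with hw | rfl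
  · have h1 := congrFun h 1
    rw [Pi.smul_apply, hv, hw, smul_eq_mul, mul_one] at h1
    rw [← h, h1, one_smul]
  · have h1 := congrFun h 1
    have h0 := congrFun h 0
    simp_all
  · have h1 := congrFun h 1
    simp_all
  · rfl

theorem IsNormalized.mk_eq_mk_iff {v w : Fin 2 → F} (hv : IsNormalized v) (hw : IsNormalized w) :
    Projectivization.mk F v hv.ne_zero = Projectivization.mk F w hw.ne_zero ↔ v = w := by
  rw [Projectivization.mk_eq_mk_iff']
  exact ⟨fun ⟨_, h⟩ ↦ (hw.eq_of_smul_eq hv h).symm, fun h ↦ ⟨1, by rw [one_smul, h]⟩⟩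

theorem IsNormalized.det_ne_zero {v w : Fin 2 → F} (hv : IsNormalized v) (hw : IsNormalized w)
    (hvw : v ≠ w) : Matrix.det !![v 0, w 0; v 1, w 1] ≠ 0 := by
  rw [Matrix.det_fin_two_of]
  rcases hv with hv | rfl <;> rcases hw with hw | rfl
  · rw [hv, hw, mul_one, mul_one, sub_ne_zero]
    exact fun h ↦ hvw (by ext i; fin_cases i <;> simp [h, hv, hw])
  · simp [hv]
  · simp [hw]
  · exact absurd rfl hvw

theorem IsNormalized.of_comp {E : Type*} [Field E] {f : F →+* E} {v : Fin 2 → F}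
    (h : IsNormalized (f ∘ v)) : IsNormalized v := by
  rcases h with h | h
  · exact .inl ((map_eq_one_iff f f.injective).1 h)
  · refine .inr (funext fun i ↦ f.injective ((congrFun h i).trans ?_))
    fin_cases i <;> simp

theorem IsNormalized.smul {K E : Type*} [Field K] [Field E] [Algebra K E] {v : Fin 2 → E}
    (hv : IsNormalized v) (g : E ≃ₐ[K] E) : IsNormalized (g • v) := by
  rcases hv with hv | rfl
  · exact .inl (by rw [Pi.smul_apply, hv, smul_one])
  · exact .inr (by ext i; fin_cases i <;> simp)

theorem exists_mk_eq_isNormalized (x : Projectivization F (Fin 2 → F)) :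
    ∃ (v : Fin 2 → F) (hv : IsNormalized v), Projectivization.mk F v hv.ne_zero = x := by
  obtain ⟨a, ha⟩ := exists_smul_isNormalized x.rep_nonzero
  refine ⟨_, ha, ?_⟩
  conv_rhs => rw [← x.mk_rep]
  exact (Projectivization.mk_eq_mk_iff' F _ _ _ _).2 ⟨a, rfl⟩

theorem mk_mem_ramPoints_iff {m : ℕ} {P Q : MvPolynomial (Fin 2) F} (hP : P.IsHomogeneous m)
    (hQ : Q.IsHomogeneous m) {u : Fin 2 → F} (hu : u ≠ 0) :
    Projectivization.mk F u hu ∈ ramPoints P Q ↔ MvPolynomial.eval u (wronskian P Q) = 0 := by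
  obtain ⟨a, ha⟩ := Projectivization.exists_smul_eq_mk_rep F u hu
  rw [ramPoints, Set.mem_ofPred_eq, ← ha, Units.smul_def, ← MvPolynomial.aeval_eq_eval,
    aeval_smul_of_isHomogeneous (isHomogeneous_wronskian hP hQ)]
  simp

theorem exists_isNormalized_pair_of_ramPoints_eq {m : ℕ}
    {P Q : MvPolynomial (Fin 2) F} (hP : P.IsHomogeneous m) (hQ : Q.IsHomogeneous m)
    {x y : Projectivization F (Fin 2 → F)} (hxy : x ≠ y) (hram : ramPoints P Q = {x, y}) :
    ∃ v w : Fin 2 → F, v ≠ w ∧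
      {u | IsNormalized u ∧ MvPolynomial.eval u (wronskian P Q) = 0} = {v, w} := by
  obtain ⟨v, hv, rfl⟩ := exists_mk_eq_isNormalized x
  obtain ⟨w, hw, rfl⟩ := exists_mk_eq_isNormalized y
  refine ⟨v, w, fun h ↦ hxy (by subst h; rfl), ?_⟩
  ext u
  have hmem (hu : IsNormalized u) :
      MvPolynomial.eval u (wronskian P Q) = 0 ↔ u = v ∨ u = w := by
    rw [← mk_mem_ramPoints_iff hP hQ hu.ne_zero, hram, Set.mem_insert_iff,
      Set.mem_singleton_iff, hu.mk_eq_mk_iff hv, hu.mk_eq_mk_iff hw]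
  constructor
  · rintro ⟨hu, h0⟩
    exact (hmem hu).1 h0
  · rintro (rfl | rfl)
    · exact ⟨hv, (hmem hv).2 (.inl rfl)⟩
    · exact ⟨hw, (hmem hw).2 (.inr rfl)⟩

end ProjectiveLine

theorem mapsTo_smul_isNormalized_zeros {K E : Type*} [Field K] [Field E] [Algebra K E]
    (W : MvPolynomial (Fin 2) K) (g : E ≃ₐ[K] E) :
    Set.MapsTo (g • ·) {u : Fin 2 → E | IsNormalized u ∧ MvPolynomial.aeval u W = 0}
      {u | IsNormalized u ∧ MvPolynomial.aeval u W = 0} := by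
  rintro u ⟨hu, h0⟩
  refine ⟨hu.smul g, ?_⟩
  change MvPolynomial.aeval (fun i ↦ g.toAlgHom (u i)) W = 0
  rw [← MvPolynomial.comp_aeval_apply, h0, map_zero]

theorem smul_mulVec_ne_col {F ι : Type*} [Field F] [Fintype ι] [DecidableEq ι] [Nontrivial ι]
    {M : Matrix ι ι F} (hM : M.det ≠ 0) {u : ι → F} (hu : ∀ i, u i ≠ 0) (a : F) (i : ι) :
    a • M.mulVec u ≠ M.col i := by
  rw [← Matrix.mulVec_smul, ← Matrix.mulVec_single_one]
  intro h
  have hsingle := Matrix.mulVec_injective_of_isUnit ((M.isUnit_iff_isUnit_det).2 hM.isUnit) h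
  obtain ⟨j, hji⟩ := exists_ne i
  have hi : a * u i = 1 := by simpa using congrFun hsingle i
  have hj : a * u j = 0 := by simpa [hji] using congrFun hsingle j
  exact mul_ne_zero (left_ne_zero_of_mul_eq_one hi) (hu j) hj

theorem isConjugateToPowerMap_of_isNormalized_zeros_eq {F E : Type*} [Field F] [Field E]
    [IsAlgClosed E] [Algebra F E] {m : ℕ} {P Q : MvPolynomial (Fin 2) F}
    (hm : (m.factorial : F) ≠ 0)
    (hP : P.IsHomogeneous m) (hQ : Q.IsHomogeneous m) (hncr : NoCommonRoot P Q)
    {v w : Fin 2 → F} (hvw : v ≠ w)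
    (hZ : {u : Fin 2 → E | IsNormalized u ∧ MvPolynomial.aeval u (wronskian P Q) = 0} =
      {algebraMap F E ∘ v, algebraMap F E ∘ w}) :
    IsConjugateToPowerMap m P Q := by
  have hmem (u : Fin 2 → E) : IsNormalized u ∧ MvPolynomial.aeval u (wronskian P Q) = 0 ↔
      u = algebraMap F E ∘ v ∨ u = algebraMap F E ∘ w := Set.ext_iff.1 hZ u
  obtain ⟨γ, hγ⟩ : ∃ γ : Matrix.GeneralLinearGroup (Fin 2) F,
      γ.val = !![v 0, w 0; v 1, w 1] := by
    refine ⟨.mkOfDetNeZero _ ?_, rfl⟩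
    exact IsNormalized.det_ne_zero ((hmem _).2 (.inl rfl)).1.of_comp
      ((hmem _).2 (.inr rfl)).1.of_comp hvw
  have hcol : (γ.val.map (algebraMap F E)).col 0 = algebraMap F E ∘ v ∧
      (γ.val.map (algebraMap F E)).col 1 = algebraMap F E ∘ w := by
    constructor <;> ext i <;> fin_cases i <;> simp [hγ]
  have hdet : (γ.val.map (algebraMap F E)).det ≠ 0 := by
    rw [← RingHom.mapMatrix_apply, ← RingHom.map_det]
    exact (_root_.map_ne_zero _).2 γ.det_ne_zero
  refine isConjugateToPowerMap_of_wronskian_ne_zero (E := E) hm hP hQ hncr γ fun u hu h0 ↦ ?_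
  have hne : (γ.val.map (algebraMap F E)).mulVec u ≠ 0 := fun h ↦
    hu 0 (congrFun (Matrix.eq_zero_of_mulVec_eq_zero hdet h) 0)
  obtain ⟨a, ha⟩ := exists_smul_isNormalized hne
  have hzero : MvPolynomial.aeval (a • (γ.val.map (algebraMap F E)).mulVec u)
      (wronskian P Q) = 0 := by
    rw [aeval_smul_of_isHomogeneous (isHomogeneous_wronskian hP hQ), h0, mul_zero]
  rcases (hmem _).1 ⟨ha, hzero⟩ with h | h
  · exact smul_mulVec_ne_col hdet hu a 0 (h.trans hcol.1.symm)
  · exact smul_mulVec_ne_col hdet hu a 1 (h.trans hcol.2.symm)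

end CGR

theorem two_ramification_points_implies_conjugate_to_power_map_general {K E : Type*} [Field K]
    [PerfectField K] [Field E] [Algebra K E] [IsAlgClosure K E] {m : ℕ}
    (hm : (m.factorial : K) ≠ 0) {P Q : MvPolynomial (Fin 2) K}
    (hP : P.IsHomogeneous m) (hQ : Q.IsHomogeneous m)
    (hncr : NoCommonRoot (MvPolynomial.map (algebraMap K E) P)
      (MvPolynomial.map (algebraMap K E) Q))
    (hram : ∃ x y, x ≠ y ∧ ramPoints (MvPolynomial.map (algebraMap K E) P)
      (MvPolynomial.map (algebraMap K E) Q) = {x, y}) :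
    ∃ L : IntermediateField K E, 0 < Module.finrank K L ∧ Module.finrank K L ≤ 2 ∧
      IsConjugateToPowerMap m (MvPolynomial.map (algebraMap K L) P)
        (MvPolynomial.map (algebraMap K L) Q) := by
  have := IsAlgClosure.isAlgClosed K (K := E)
  have := IsAlgClosure.normal K E
  have := IsAlgClosure.isAlgebraic (R := K) (K := E)
  have : IsGalois K E := {}
  obtain ⟨x, y, hxy, hram⟩ := hram
  obtain ⟨v, w, hvw, hZ⟩ := exists_isNormalized_pair_of_ramPoints_eq (hP.map _) (hQ.map _) hxy hram
  simp only [← map_wronskian, ← MvPolynomial.aeval_eq_eval,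
    MvPolynomial.aeval_map_algebraMap] at hZ
  obtain ⟨L, hpos, hle, hvL, hwL⟩ := exists_intermediateField_finrank_le_two hvw fun g ↦
    hZ ▸ mapsTo_smul_isNormalized_zeros (CGR.wronskian P Q) g
  lift v to Fin 2 → L using hvL
  lift w to Fin 2 → L using hwL
  have hvwL : v ≠ w := by rintro rfl; exact hvw rfl
  have hmL : (m.factorial : L) ≠ 0 := by simpa using (_root_.map_ne_zero (algebraMap K L)).2 hm
  rw [IsScalarTower.algebraMap_eq K L E, ← MvPolynomial.map_map, ← MvPolynomial.map_map] at hncr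
  refine ⟨L, hpos, hle, isConjugateToPowerMap_of_isNormalized_zeros_eq (E := E) hmL (hP.map _)
    (hQ.map _) hncr.of_map hvwL ?_⟩
  simp only [← map_wronskian, MvPolynomial.aeval_map_algebraMap]
  exact hZ

theorem two_ramification_points_implies_conjugate_to_power_map
    (K : Type*) [Field K] [NumberField K]
    (m : ℕ) (hm : 2 ≤ m)
    (P Q : MvPolynomial (Fin 2) K)
    (hP : P.IsHomogeneous m) (hQ : Q.IsHomogeneous m)
    (hncr : NoCommonRoot (MvPolynomial.map (algebraMap K (AlgebraicClosure K)) P)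
      (MvPolynomial.map (algebraMap K (AlgebraicClosure K)) Q))
    -- `φ` ramifies at exactly two points of `ℙ¹(K̄)`
    (hram : ∃ x y, x ≠ y ∧
      ramPoints (MvPolynomial.map (algebraMap K (AlgebraicClosure K)) P)
        (MvPolynomial.map (algebraMap K (AlgebraicClosure K)) Q) = {x, y}) :
    -- there are a quadratic (or trivial) extension `L/K` and `σ, γ ∈ PGL₂(L)`
    -- with `σ ∘ φ ∘ γ : x ↦ a·x^m`
    ∃ L : IntermediateField K (AlgebraicClosure K),
      0 < Module.finrank K ↥L ∧ Module.finrank K ↥L ≤ 2 ∧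
      ∃ (σ γ : Matrix.GeneralLinearGroup (Fin 2) ↥L) (a lam : (↥L)ˣ),
        MvPolynomial.C ((σ : Matrix (Fin 2) (Fin 2) ↥L) 0 0) *
            matComp (γ : Matrix (Fin 2) (Fin 2) ↥L)
              (MvPolynomial.map (algebraMap K ↥L) P) +
          MvPolynomial.C ((σ : Matrix (Fin 2) (Fin 2) ↥L) 0 1) *
            matComp (γ : Matrix (Fin 2) (Fin 2) ↥L)
              (MvPolynomial.map (algebraMap K ↥L) Q) =
          MvPolynomial.C (lam : ↥L) * (MvPolynomial.C (a : ↥L) * MvPolynomial.X 0 ^ m) ∧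
        MvPolynomial.C ((σ : Matrix (Fin 2) (Fin 2) ↥L) 1 0) *
            matComp (γ : Matrix (Fin 2) (Fin 2) ↥L)
              (MvPolynomial.map (algebraMap K ↥L) P) +
          MvPolynomial.C ((σ : Matrix (Fin 2) (Fin 2) ↥L) 1 1) *
            matComp (γ : Matrix (Fin 2) (Fin 2) ↥L)
              (MvPolynomial.map (algebraMap K ↥L) Q) =
          MvPolynomial.C (lam : ↥L) * (MvPolynomial.X 1 ^ m : MvPolynomial (Fin 2) ↥L) :=
  two_ramification_points_implies_conjugate_to_power_map_general
    (Nat.cast_ne_zero.2 m.factorial_ne_zero) hP hQ hncr hram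

end
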